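/- Let n ≥ 2 be an integer and set A(λ) = ((−λ + √(λ² + 4n))/2)·√(λ² + 4n) for λ ∈ ℝ. Then: (i) for every λ ≤ 0 one has A(λ) > n; and (ii) for every λ ≤ 0, A(λ) < 2n + 2 holds if and only if λ > −2/√(n+2). In particular, for −2/√(n+2) < λ ≤ 0 one has n < A(λ) < 2n + 2. -/

import Mathlib

/-- The coefficient `A(λ) = ((-λ+√(λ²+4n))/2)·√(λ²+4n)` of the linearization of the
rotational `λ`-hypersurface equation around the round sphere. -/
noncomputable def Acoef (n : ℕ) (lam : ℝ) : ℝ :=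
  ((-lam + Real.sqrt (lam ^ 2 + 4 * n)) / 2) * Real.sqrt (lam ^ 2 + 4 * n)

/-! The coefficient exceeds `n` by the square of the radius `r = (-λ + √(λ² + 4n))/2` of the round
sphere: from `r² + λr = n` and `√(λ² + 4n) = 2r + λ` we get `A = r(2r + λ) = n + r²`. Hence `A > n`,
and `A < 2n + 2` means `r < √(n + 2)`. Since `λ = n/r - r` is strictly decreasing in `r > 0`, the
threshold is the value of `λ` at `r = √(n + 2)`, which is `-2/√(n + 2)`. -/

section SphereRadius

/-- The radius of the round `n`-sphere centred at the origin that satisfies `H + ⟨X, ν⟩ = λ`, i.e.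
the larger root `r` of `r² + λr = n`; the dimension `n` is allowed to be real. -/
noncomputable def sphereRadius (n lam : ℝ) : ℝ :=
  (-lam + √(lam ^ 2 + 4 * n)) / 2

variable {n : ℝ} (lam : ℝ)

theorem two_mul_sphereRadius_add : 2 * sphereRadius n lam + lam = √(lam ^ 2 + 4 * n) := by
  unfold sphereRadius
  ring

theorem sphereRadius_mul_sphereRadius_add (hn : 0 ≤ n) :
    sphereRadius n lam * (sphereRadius n lam + lam) = n := by
  have hsq : (2 * sphereRadius n lam + lam) ^ 2 = lam ^ 2 + 4 * n := by
    rw [two_mul_sphereRadius_add, Real.sq_sqrt (by positivity)]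
  linarith

theorem sphereRadius_pos (hn : 0 < n) : 0 < sphereRadius n lam := by
  have hlam : lam < √(lam ^ 2 + 4 * n) := Real.lt_sqrt_of_sq_lt (by linarith)
  unfold sphereRadius
  linarith

theorem abs_le_two_mul_sphereRadius_add (hn : 0 ≤ n) : |lam| ≤ 2 * sphereRadius n lam + lam := by
  rw [two_mul_sphereRadius_add]
  exact Real.abs_le_sqrt (by linarith)

theorem sphereRadius_nonneg (hn : 0 ≤ n) : 0 ≤ sphereRadius n lam := by
  linarith [abs_le_two_mul_sphereRadius_add lam hn, le_abs_self lam]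

theorem sphereRadius_add_nonneg (hn : 0 ≤ n) : 0 ≤ sphereRadius n lam + lam := by
  linarith [abs_le_two_mul_sphereRadius_add lam hn, neg_le_abs lam]

theorem sphereRadius_lt_iff (hn : 0 ≤ n) {a : ℝ} (ha : 0 < a) :
    sphereRadius n lam < a ↔ n / a - a < lam := by
  set r := sphereRadius n lam
  have hfactor : (lam + a) * a - n = (a - r) * (a + (r + lam)) := by
    linear_combination sphereRadius_mul_sphereRadius_add lam hn
  have hpos : 0 < a + (r + lam) :=
    add_pos_of_pos_of_nonneg ha (sphereRadius_add_nonneg lam hn)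
  rw [sub_lt_iff_lt_add, div_lt_iff₀ ha, ← sub_pos (b := n), hfactor, mul_pos_iff_of_pos_right hpos,
    sub_pos]

end SphereRadius

section Acoef

variable {n : ℕ} (lam : ℝ)

theorem Acoef_eq_add_sphereRadius_sq : Acoef n lam = n + sphereRadius n lam ^ 2 := by
  calc Acoef n lam
    _ = sphereRadius n lam * (2 * sphereRadius n lam + lam) := by
      rw [two_mul_sphereRadius_add, Acoef, sphereRadius]
    _ = n + sphereRadius n lam ^ 2 := by
      linear_combination sphereRadius_mul_sphereRadius_add lam n.cast_nonneg

theorem lt_Acoef (hn : n ≠ 0) : n < Acoef n lam := by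
  rw [Acoef_eq_add_sphereRadius_sq]
  exact lt_add_of_pos_right _ (pow_pos (sphereRadius_pos lam (by positivity)) 2)

theorem Acoef_lt_add_sq_iff {a : ℝ} (ha : 0 < a) : Acoef n lam < n + a ^ 2 ↔ n / a - a < lam := by
  rw [Acoef_eq_add_sphereRadius_sq, add_lt_add_iff_left,
    pow_lt_pow_iff_left₀ (sphereRadius_nonneg lam n.cast_nonneg) ha.le two_ne_zero,
    sphereRadius_lt_iff lam n.cast_nonneg ha]

theorem Acoef_lt_two_mul_add_two_iff :
    Acoef n lam < 2 * (n : ℝ) + 2 ↔ -2 / √((n : ℝ) + 2) < lam := by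
  have ha : 0 < √((n : ℝ) + 2) := by positivity
  have hsq : √((n : ℝ) + 2) ^ 2 = n + 2 := Real.sq_sqrt (by positivity)
  have hbound : 2 * (n : ℝ) + 2 = n + √((n : ℝ) + 2) ^ 2 := by
    rw [hsq]
    ring
  have hthreshold : -2 / √((n : ℝ) + 2) = n / √((n : ℝ) + 2) - √((n : ℝ) + 2) := by
    field_simp
    linarith
  rw [hbound, hthreshold, Acoef_lt_add_sq_iff lam ha]

end Acoef

theorem Acoef_bounds_general (n : ℕ) (hn : n ≠ 0) (lam : ℝ) :
    n < Acoef n lam ∧ (Acoef n lam < 2 * (n : ℝ) + 2 ↔ -2 / √((n : ℝ) + 2) < lam) :=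
  ⟨lt_Acoef lam hn, Acoef_lt_two_mul_add_two_iff lam⟩

/-- Sign conditions from the proof of Lemma 3.4: for `λ ≤ 0` one has `A(λ) > n`, and
`A(λ) < 2n+2` iff `λ > -2/√(n+2)`; in particular `n < A(λ) < 2n+2` for
`-2/√(n+2) < λ ≤ 0`. -/
theorem Acoef_bounds (n : ℕ) (hn : 2 ≤ n) :
    (∀ lam : ℝ, lam ≤ 0 → (n : ℝ) < Acoef n lam) ∧
    (∀ lam : ℝ, lam ≤ 0 →
      (Acoef n lam < 2 * (n : ℝ) + 2 ↔ -2 / Real.sqrt ((n : ℝ) + 2) < lam)) ∧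
    (∀ lam : ℝ, -2 / Real.sqrt ((n : ℝ) + 2) < lam → lam ≤ 0 →
      (n : ℝ) < Acoef n lam ∧ Acoef n lam < 2 * (n : ℝ) + 2) := by
  have bounds := Acoef_bounds_general n (by lia)
  exact ⟨fun lam _ ↦ (bounds lam).1, fun lam _ ↦ (bounds lam).2,
    fun lam hlam _ ↦ ⟨(bounds lam).1, (bounds lam).2.2 hlam⟩⟩
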